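/- There is a sequence of cut-free Lε-proofs of end-sequents S_i such that: (1) the size of S_i is polynomial in i; (2) each S_i is the epsilon translation of a first-order sequent S'_i containing weak quantifiers only; (3) the size of these cut-free Lε-proofs is polynomially bounded in i; and (4) there is no elementary function of i bounding the size of the smallest cut-free LK-proofs of S'_i. Hence cut-free Lε-proofs give a non-elementary speed-up over cut-free LK-proofs. -/

import Mathlib

namespace EpsCalc

/-! ## Syntax: terms and formulas of first-order logic extended by epsilon terms.
We use a locally nameless representation: `bvar` are de Bruijn indices for bound
variables (bound by `all`, `ex`, or `eps`), `fvar` are named free variables. -/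

mutual
inductive Tm : Type where
  | bvar : ℕ → Tm
  | fvar : ℕ → Tm
  | func : ℕ → Tms → Tm
  | eps  : Fm → Tm          -- the epsilon term ε_x A(x)

inductive Tms : Type where
  | nil  : Tms
  | cons : Tm → Tms → Tms

inductive Fm : Type where
  | atom : ℕ → Tms → Fm
  | and  : Fm → Fm → Fm
  | or   : Fm → Fm → Fm
  | imp  : Fm → Fm → Fm
  | not  : Fm → Fm
  | all  : Fm → Fm          -- ∀ binding de Bruijn index 0
  | ex   : Fm → Fm          -- ∃ binding de Bruijn index 0
end

/-! lifting of bound variables (shift indices ≥ k by one) -/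
mutual
def liftT (k : ℕ) : Tm → Tm
  | .bvar n => if n < k then .bvar n else .bvar (n+1)
  | .fvar a => .fvar a
  | .func f ts => .func f (liftTs k ts)
  | .eps A => .eps (liftF (k+1) A)
def liftTs (k : ℕ) : Tms → Tms
  | .nil => .nil
  | .cons t ts => .cons (liftT k t) (liftTs k ts)
def liftF (k : ℕ) : Fm → Fm
  | .atom p ts => .atom p (liftTs k ts)
  | .and A B => .and (liftF k A) (liftF k B)
  | .or A B => .or (liftF k A) (liftF k B)
  | .imp A B => .imp (liftF k A) (liftF k B)
  | .not A => .not (liftF k A)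
  | .all A => .all (liftF (k+1) A)
  | .ex A => .ex (liftF (k+1) A)
end

/-! substitution of a term for the bound variable k -/
mutual
def subT (k : ℕ) (u : Tm) : Tm → Tm
  | .bvar n => if n = k then u else if n < k then .bvar n else .bvar (n-1)
  | .fvar a => .fvar a
  | .func f ts => .func f (subTs k u ts)
  | .eps A => .eps (subF (k+1) (liftT 0 u) A)
def subTs (k : ℕ) (u : Tm) : Tms → Tms
  | .nil => .nil
  | .cons t ts => .cons (subT k u t) (subTs k u ts)
def subF (k : ℕ) (u : Tm) : Fm → Fm
  | .atom p ts => .atom p (subTs k u ts)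
  | .and A B => .and (subF k u A) (subF k u B)
  | .or A B => .or (subF k u A) (subF k u B)
  | .imp A B => .imp (subF k u A) (subF k u B)
  | .not A => .not (subF k u A)
  | .all A => .all (subF (k+1) (liftT 0 u) A)
  | .ex A => .ex (subF (k+1) (liftT 0 u) A)
end

/-- instantiate the outermost bound variable of `A` with the term `t`:  A(t) -/
def inst0 (A : Fm) (t : Tm) : Fm := subF 0 t A

/-! substitution of a term for a *free* variable -/
mutual
def sfvT (a : ℕ) (u : Tm) : Tm → Tm
  | .bvar n => .bvar n
  | .fvar b => if b = a then u else .fvar b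
  | .func f ts => .func f (sfvTs a u ts)
  | .eps A => .eps (sfvF a (liftT 0 u) A)
def sfvTs (a : ℕ) (u : Tm) : Tms → Tms
  | .nil => .nil
  | .cons t ts => .cons (sfvT a u t) (sfvTs a u ts)
def sfvF (a : ℕ) (u : Tm) : Fm → Fm
  | .atom p ts => .atom p (sfvTs a u ts)
  | .and A B => .and (sfvF a u A) (sfvF a u B)
  | .or A B => .or (sfvF a u A) (sfvF a u B)
  | .imp A B => .imp (sfvF a u A) (sfvF a u B)
  | .not A => .not (sfvF a u A)
  | .all A => .all (sfvF a (liftT 0 u) A)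
  | .ex A => .ex (sfvF a (liftT 0 u) A)
end

/-! abstraction of a free variable into a bound variable (for universal closure) -/
mutual
def abT (a k : ℕ) : Tm → Tm
  | .bvar n => .bvar n
  | .fvar b => if b = a then .bvar k else .fvar b
  | .func f ts => .func f (abTs a k ts)
  | .eps A => .eps (abF a (k+1) A)
def abTs (a k : ℕ) : Tms → Tms
  | .nil => .nil
  | .cons t ts => .cons (abT a k t) (abTs a k ts)
def abF (a k : ℕ) : Fm → Fm
  | .atom p ts => .atom p (abTs a k ts)
  | .and A B => .and (abF a k A) (abF a k B)
  | .or A B => .or (abF a k A) (abF a k B)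
  | .imp A B => .imp (abF a k A) (abF a k B)
  | .not A => .not (abF a k A)
  | .all A => .all (abF a (k+1) A)
  | .ex A => .ex (abF a (k+1) A)
end

/-! free variables -/
mutual
def fvT : Tm → List ℕ
  | .bvar _ => []
  | .fvar a => [a]
  | .func _ ts => fvTs ts
  | .eps A => fvF A
def fvTs : Tms → List ℕ
  | .nil => []
  | .cons t ts => fvT t ++ fvTs ts
def fvF : Fm → List ℕ
  | .atom _ ts => fvTs ts
  | .and A B => fvF A ++ fvF B
  | .or A B => fvF A ++ fvF B
  | .imp A B => fvF A ++ fvF B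
  | .not A => fvF A
  | .all A => fvF A
  | .ex A => fvF A
end

/-! function symbols occurring in an expression -/
mutual
def fsT : Tm → List ℕ
  | .bvar _ => []
  | .fvar _ => []
  | .func f ts => f :: fsTs ts
  | .eps A => fsF A
def fsTs : Tms → List ℕ
  | .nil => []
  | .cons t ts => fsT t ++ fsTs ts
def fsF : Fm → List ℕ
  | .atom _ ts => fsTs ts
  | .and A B => fsF A ++ fsF B
  | .or A B => fsF A ++ fsF B
  | .imp A B => fsF A ++ fsF B
  | .not A => fsF A
  | .all A => fsF A
  | .ex A => fsF A
end

/-! number of symbols (size) -/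
mutual
def szT : Tm → ℕ
  | .bvar _ => 1
  | .fvar _ => 1
  | .func _ ts => 1 + szTs ts
  | .eps A => 1 + szF A
def szTs : Tms → ℕ
  | .nil => 0
  | .cons t ts => szT t + szTs ts
def szF : Fm → ℕ
  | .atom _ ts => 1 + szTs ts
  | .and A B => 1 + szF A + szF B
  | .or A B => 1 + szF A + szF B
  | .imp A B => 1 + szF A + szF B
  | .not A => 1 + szF A
  | .all A => 1 + szF A
  | .ex A => 1 + szF A
end

/-! epsilon-freeness (first-order language) and quantifier-freeness (epsilon language) -/
mutual
def noEpsT : Tm → Bool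
  | .bvar _ => true
  | .fvar _ => true
  | .func _ ts => noEpsTs ts
  | .eps _ => false
def noEpsTs : Tms → Bool
  | .nil => true
  | .cons t ts => noEpsT t && noEpsTs ts
def noEpsF : Fm → Bool
  | .atom _ ts => noEpsTs ts
  | .and A B => noEpsF A && noEpsF B
  | .or A B => noEpsF A && noEpsF B
  | .imp A B => noEpsF A && noEpsF B
  | .not A => noEpsF A
  | .all A => noEpsF A
  | .ex A => noEpsF A
end

/-- `A` is a formula of the first-order language: it contains no epsilon terms. -/
def isFO (A : Fm) : Bool := noEpsF A

/-- quantifier-freeness: `A` belongs to the language of the epsilon calculus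
(propositional language over epsilon terms) iff `qfree A`. -/
def qfree : Fm → Bool
  | .atom _ _ => true
  | .and A B => qfree A && qfree B
  | .or A B => qfree A && qfree B
  | .imp A B => qfree A && qfree B
  | .not A => qfree A
  | .all _ => false
  | .ex _ => false

/-- The epsilon translation [A]^ε of a formula. -/
def epsT : Fm → Fm
  | .atom p ts => .atom p ts
  | .and A B => .and (epsT A) (epsT B)
  | .or A B => .or (epsT A) (epsT B)
  | .imp A B => .imp (epsT A) (epsT B)
  | .not A => .not (epsT A)
  | .ex A => inst0 (epsT A) (.eps (epsT A))
  | .all A => inst0 (epsT A) (.eps (.not (epsT A)))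

/-! ## The matrix A^M of a formula: delete all quantifiers and replace the
variables bound by them by fresh free variables. -/
mutual
def mxT (b d : ℕ) : Tm → Tm
  | .bvar n => if n < d then .fvar (b + (d - 1 - n)) else .bvar (n - d)
  | .fvar a => .fvar a
  | .func f ts => .func f (mxTs b d ts)
  | .eps A => .eps A          -- (the matrix is only used on epsilon-free formulas)
def mxTs (b d : ℕ) : Tms → Tms
  | .nil => .nil
  | .cons t ts => .cons (mxT b d t) (mxTs b d ts)
def mxF (b d : ℕ) : Fm → Fm
  | .atom p ts => .atom p (mxTs b d ts)
  | .and A B => .and (mxF b d A) (mxF b d B)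
  | .or A B => .or (mxF b d A) (mxF b d B)
  | .imp A B => .imp (mxF b d A) (mxF b d B)
  | .not A => .not (mxF b d A)
  | .all A => mxF b (d+1) A
  | .ex A => mxF b (d+1) A
end

def maxFv (A : Fm) : ℕ := (fvF A).foldr max 0

/-- the matrix A^M of A -/
def matrix (A : Fm) : Fm := mxF (maxFv A + 1) 0 A

/-- universal closure ∀x̄ A over all free variables of A -/
def uclose (A : Fm) : Fm :=
  ((fvF A).dedup).foldr (fun a B => Fm.all (abF a 0 B)) A

/-! ## Weak/strong quantifier occurrences.
`posW A` : all quantifier occurrences of `A` are weak when `A` occurs in the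
succedent; `negW A` : likewise for the antecedent. -/
mutual
def posW : Fm → Bool
  | .atom _ _ => true
  | .and A B => posW A && posW B
  | .or A B => posW A && posW B
  | .imp A B => negW A && posW B
  | .not A => negW A
  | .all _ => false
  | .ex A => posW A
def negW : Fm → Bool
  | .atom _ _ => true
  | .and A B => negW A && negW B
  | .or A B => negW A && negW B
  | .imp A B => posW A && negW B
  | .not A => posW A
  | .all A => negW A
  | .ex _ => false
end

/-- the sequent Γ ⊢ Δ contains weak quantifier occurrences only -/
def WeakSeq (Γ Δ : List Fm) : Prop :=
  (∀ A ∈ Γ, negW A = true) ∧ (∀ A ∈ Δ, posW A = true)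

/-- the sequent Γ ⊢ Δ is in the first-order language -/
def FOSeq (Γ Δ : List Fm) : Prop :=
  (∀ A ∈ Γ, isFO A = true) ∧ (∀ A ∈ Δ, isFO A = true)

/-- the sequent Γ ⊢ Δ is in the language of the epsilon calculus -/
def EpsSeq (Γ Δ : List Fm) : Prop :=
  (∀ A ∈ Γ, qfree A = true) ∧ (∀ A ∈ Δ, qfree A = true)

def fvSeq (Γ Δ : List Fm) : List ℕ :=
  (Γ ++ Δ).foldr (fun A l => fvF A ++ l) []

def fsSeq (Γ Δ : List Fm) : List ℕ :=
  (Γ ++ Δ).foldr (fun A l => fsF A ++ l) []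

def seqSize (Γ Δ : List Fm) : ℕ :=
  (Γ ++ Δ).foldr (fun A n => szF A + n) 0


/-! ## LK derivation trees.
`Deriv Γ Δ` are derivation trees of the sequent Γ ⊢ Δ built from the rules of
Gentzen's LK, where the strong quantifier rules `allR`/`exL` carry an
eigenvariable but *no* correctness condition; the various eigenvariable
disciplines (LK, LK⁺, LK⁺⁺) are imposed as predicates on the trees below. -/
inductive Deriv : List Fm → List Fm → Type where
  | ax (A : Fm) : Deriv [A] [A]
  | andL (A B : Fm) (Γ Δ : List Fm) :
      Deriv (A :: B :: Γ) Δ → Deriv (Fm.and A B :: Γ) Δ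
  | andR (A B : Fm) (Γ₁ Δ₁ Γ₂ Δ₂ : List Fm) :
      Deriv Γ₁ (A :: Δ₁) → Deriv Γ₂ (B :: Δ₂) →
      Deriv (Γ₁ ++ Γ₂) (Fm.and A B :: (Δ₁ ++ Δ₂))
  | orL (A B : Fm) (Γ₁ Δ₁ Γ₂ Δ₂ : List Fm) :
      Deriv (A :: Γ₁) Δ₁ → Deriv (B :: Γ₂) Δ₂ →
      Deriv (Fm.or A B :: (Γ₁ ++ Γ₂)) (Δ₁ ++ Δ₂)
  | orR (A B : Fm) (Γ Δ : List Fm) :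
      Deriv Γ (A :: B :: Δ) → Deriv Γ (Fm.or A B :: Δ)
  | impL (A B : Fm) (Γ₁ Δ₁ Γ₂ Δ₂ : List Fm) :
      Deriv Γ₁ (A :: Δ₁) → Deriv (B :: Γ₂) Δ₂ →
      Deriv (Fm.imp A B :: (Γ₁ ++ Γ₂)) (Δ₁ ++ Δ₂)
  | impR (A B : Fm) (Γ Δ : List Fm) :
      Deriv (A :: Γ) (B :: Δ) → Deriv Γ (Fm.imp A B :: Δ)
  | notL (A : Fm) (Γ Δ : List Fm) :
      Deriv Γ (A :: Δ) → Deriv (Fm.not A :: Γ) Δ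
  | notR (A : Fm) (Γ Δ : List Fm) :
      Deriv (A :: Γ) Δ → Deriv Γ (Fm.not A :: Δ)
  | wL (A : Fm) (Γ Δ : List Fm) : Deriv Γ Δ → Deriv (A :: Γ) Δ
  | wR (A : Fm) (Γ Δ : List Fm) : Deriv Γ Δ → Deriv Γ (A :: Δ)
  | cL (A : Fm) (Γ Δ : List Fm) : Deriv (A :: A :: Γ) Δ → Deriv (A :: Γ) Δ
  | cR (A : Fm) (Γ Δ : List Fm) : Deriv Γ (A :: A :: Δ) → Deriv Γ (A :: Δ)
  | cut (A : Fm) (Γ₁ Δ₁ Γ₂ Δ₂ : List Fm) :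
      Deriv Γ₁ (A :: Δ₁) → Deriv (A :: Γ₂) Δ₂ →
      Deriv (Γ₁ ++ Γ₂) (Δ₁ ++ Δ₂)
  | allL (t : Tm) (A : Fm) (Γ Δ : List Fm) :
      Deriv (inst0 A t :: Γ) Δ → Deriv (Fm.all A :: Γ) Δ
  | allR (a : ℕ) (A : Fm) (Γ Δ : List Fm) :
      Deriv Γ (inst0 A (Tm.fvar a) :: Δ) → Deriv Γ (Fm.all A :: Δ)
  | exL (a : ℕ) (A : Fm) (Γ Δ : List Fm) :
      Deriv (inst0 A (Tm.fvar a) :: Γ) Δ → Deriv (Fm.ex A :: Γ) Δ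
  | exR (t : Tm) (A : Fm) (Γ Δ : List Fm) :
      Deriv Γ (inst0 A t :: Δ) → Deriv Γ (Fm.ex A :: Δ)
  | permL (Γ Γ' Δ : List Fm) : Γ.Perm Γ' → Deriv Γ Δ → Deriv Γ' Δ
  | permR (Γ Δ Δ' : List Fm) : Δ.Perm Δ' → Deriv Γ Δ → Deriv Γ Δ'

namespace Deriv

/-- the size of a derivation: the number of inference steps occurring in it -/
def size : ∀ {Γ Δ}, Deriv Γ Δ → ℕ
  | _, _, ax _ => 1
  | _, _, andL _ _ _ _ d => d.size + 1
  | _, _, andR _ _ _ _ _ _ d e => d.size + e.size + 1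
  | _, _, orL _ _ _ _ _ _ d e => d.size + e.size + 1
  | _, _, orR _ _ _ _ d => d.size + 1
  | _, _, impL _ _ _ _ _ _ d e => d.size + e.size + 1
  | _, _, impR _ _ _ _ d => d.size + 1
  | _, _, notL _ _ _ d => d.size + 1
  | _, _, notR _ _ _ d => d.size + 1
  | _, _, wL _ _ _ d => d.size + 1
  | _, _, wR _ _ _ d => d.size + 1
  | _, _, cL _ _ _ d => d.size + 1
  | _, _, cR _ _ _ d => d.size + 1
  | _, _, cut _ _ _ _ _ d e => d.size + e.size + 1
  | _, _, allL _ _ _ _ d => d.size + 1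
  | _, _, allR _ _ _ _ d => d.size + 1
  | _, _, exL _ _ _ _ d => d.size + 1
  | _, _, exR _ _ _ _ d => d.size + 1
  | _, _, permL _ _ _ _ d => d.size + 1
  | _, _, permR _ _ _ _ d => d.size + 1

/-- the list of cut formulas occurring in a derivation -/
def cutFms : ∀ {Γ Δ}, Deriv Γ Δ → List Fm
  | _, _, ax _ => []
  | _, _, andL _ _ _ _ d => d.cutFms
  | _, _, andR _ _ _ _ _ _ d e => d.cutFms ++ e.cutFms
  | _, _, orL _ _ _ _ _ _ d e => d.cutFms ++ e.cutFms
  | _, _, orR _ _ _ _ d => d.cutFms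
  | _, _, impL _ _ _ _ _ _ d e => d.cutFms ++ e.cutFms
  | _, _, impR _ _ _ _ d => d.cutFms
  | _, _, notL _ _ _ d => d.cutFms
  | _, _, notR _ _ _ d => d.cutFms
  | _, _, wL _ _ _ d => d.cutFms
  | _, _, wR _ _ _ d => d.cutFms
  | _, _, cL _ _ _ d => d.cutFms
  | _, _, cR _ _ _ d => d.cutFms
  | _, _, cut A _ _ _ _ d e => A :: (d.cutFms ++ e.cutFms)
  | _, _, allL _ _ _ _ d => d.cutFms
  | _, _, allR _ _ _ _ d => d.cutFms
  | _, _, exL _ _ _ _ d => d.cutFms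
  | _, _, exR _ _ _ _ d => d.cutFms
  | _, _, permL _ _ _ _ d => d.cutFms
  | _, _, permR _ _ _ _ d => d.cutFms

/-- data of the strong quantifier inferences of a derivation:
(eigenvariable, auxiliary formula, main formula) -/
def strongs : ∀ {Γ Δ}, Deriv Γ Δ → List (ℕ × Fm × Fm)
  | _, _, ax _ => []
  | _, _, andL _ _ _ _ d => d.strongs
  | _, _, andR _ _ _ _ _ _ d e => d.strongs ++ e.strongs
  | _, _, orL _ _ _ _ _ _ d e => d.strongs ++ e.strongs
  | _, _, orR _ _ _ _ d => d.strongs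
  | _, _, impL _ _ _ _ _ _ d e => d.strongs ++ e.strongs
  | _, _, impR _ _ _ _ d => d.strongs
  | _, _, notL _ _ _ d => d.strongs
  | _, _, notR _ _ _ d => d.strongs
  | _, _, wL _ _ _ d => d.strongs
  | _, _, wR _ _ _ d => d.strongs
  | _, _, cL _ _ _ d => d.strongs
  | _, _, cR _ _ _ d => d.strongs
  | _, _, cut _ _ _ _ _ d e => d.strongs ++ e.strongs
  | _, _, allL _ _ _ _ d => d.strongs
  | _, _, allR a A _ _ d => (a, inst0 A (Tm.fvar a), Fm.all A) :: d.strongs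
  | _, _, exL a A _ _ d => (a, inst0 A (Tm.fvar a), Fm.ex A) :: d.strongs
  | _, _, exR _ _ _ _ d => d.strongs
  | _, _, permL _ _ _ _ d => d.strongs
  | _, _, permR _ _ _ _ d => d.strongs

/-- the standard (local) eigenvariable conditions of LK: the eigenvariable of a
strong quantifier inference does not occur free in its conclusion -/
def Std : ∀ {Γ Δ}, Deriv Γ Δ → Prop
  | _, _, ax _ => True
  | _, _, andL _ _ _ _ d => d.Std
  | _, _, andR _ _ _ _ _ _ d e => d.Std ∧ e.Std
  | _, _, orL _ _ _ _ _ _ d e => d.Std ∧ e.Std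
  | _, _, orR _ _ _ _ d => d.Std
  | _, _, impL _ _ _ _ _ _ d e => d.Std ∧ e.Std
  | _, _, impR _ _ _ _ d => d.Std
  | _, _, notL _ _ _ d => d.Std
  | _, _, notR _ _ _ d => d.Std
  | _, _, wL _ _ _ d => d.Std
  | _, _, wR _ _ _ d => d.Std
  | _, _, cL _ _ _ d => d.Std
  | _, _, cR _ _ _ d => d.Std
  | _, _, cut _ _ _ _ _ d e => d.Std ∧ e.Std
  | _, _, allL _ _ _ _ d => d.Std
  | _, _, allR a A Γ Δ d => a ∉ fvSeq Γ (Fm.all A :: Δ) ∧ d.Std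
  | _, _, exL a A Γ Δ d => a ∉ fvSeq (Fm.ex A :: Γ) Δ ∧ d.Std
  | _, _, exR _ _ _ _ d => d.Std
  | _, _, permL _ _ _ _ d => d.Std
  | _, _, permR _ _ _ _ d => d.Std

end Deriv

/-- the side variable relation `<_φ`: `b` is a side variable of `a` in `φ` if `φ`
contains a strong quantifier inference with eigenvariable `a` whose auxiliary
formula contains the free variable `b` -/
def sideRel {Γ Δ} (d : Deriv Γ Δ) (a b : ℕ) : Prop :=
  ∃ e ∈ d.strongs, e.1 = a ∧ b ∈ fvF e.2.1 ∧ b ≠ a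

/-- acyclicity of a binary relation -/
def Acyc (r : ℕ → ℕ → Prop) : Prop := ∀ x, ¬ Relation.TransGen r x x

/-- LK⁺-suitability of (all strong quantifier inferences of) a derivation:
substitutability, the side variable condition, and weak regularity. -/
def SuitP {Γ Δ} (d : Deriv Γ Δ) : Prop :=
  (∀ e ∈ d.strongs, e.1 ∉ fvSeq Γ Δ) ∧
  Acyc (sideRel d) ∧
  (d.strongs.map (·.1)).Nodup

/-- LK⁺⁺-suitability: substitutability, the side variable condition, and very
weak regularity (equal eigenvariables only for equal main formulas). -/
def SuitPP {Γ Δ} (d : Deriv Γ Δ) : Prop :=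
  (∀ e ∈ d.strongs, e.1 ∉ fvSeq Γ Δ) ∧
  Acyc (sideRel d) ∧
  (∀ e₁ ∈ d.strongs, ∀ e₂ ∈ d.strongs, e₁.1 = e₂.1 → e₁.2.2 = e₂.2.2)

/-! ## The sequent calculus Lε of the epsilon calculus:
atomic axioms, the propositional, structural and cut rules of LK, the weak
quantifier rules ∃_r and ∀_l producing epsilon terms, and a substitution rule
replacing the strong quantifier inferences. -/
inductive EDeriv : List Fm → List Fm → Type where
  | ax (p : ℕ) (ts : Tms) : EDeriv [Fm.atom p ts] [Fm.atom p ts]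
  | andL (A B : Fm) (Γ Δ : List Fm) :
      EDeriv (A :: B :: Γ) Δ → EDeriv (Fm.and A B :: Γ) Δ
  | andR (A B : Fm) (Γ₁ Δ₁ Γ₂ Δ₂ : List Fm) :
      EDeriv Γ₁ (A :: Δ₁) → EDeriv Γ₂ (B :: Δ₂) →
      EDeriv (Γ₁ ++ Γ₂) (Fm.and A B :: (Δ₁ ++ Δ₂))
  | orL (A B : Fm) (Γ₁ Δ₁ Γ₂ Δ₂ : List Fm) :
      EDeriv (A :: Γ₁) Δ₁ → EDeriv (B :: Γ₂) Δ₂ →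
      EDeriv (Fm.or A B :: (Γ₁ ++ Γ₂)) (Δ₁ ++ Δ₂)
  | orR (A B : Fm) (Γ Δ : List Fm) :
      EDeriv Γ (A :: B :: Δ) → EDeriv Γ (Fm.or A B :: Δ)
  | impL (A B : Fm) (Γ₁ Δ₁ Γ₂ Δ₂ : List Fm) :
      EDeriv Γ₁ (A :: Δ₁) → EDeriv (B :: Γ₂) Δ₂ →
      EDeriv (Fm.imp A B :: (Γ₁ ++ Γ₂)) (Δ₁ ++ Δ₂)
  | impR (A B : Fm) (Γ Δ : List Fm) :
      EDeriv (A :: Γ) (B :: Δ) → EDeriv Γ (Fm.imp A B :: Δ)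
  | notL (A : Fm) (Γ Δ : List Fm) :
      EDeriv Γ (A :: Δ) → EDeriv (Fm.not A :: Γ) Δ
  | notR (A : Fm) (Γ Δ : List Fm) :
      EDeriv (A :: Γ) Δ → EDeriv Γ (Fm.not A :: Δ)
  | wL (A : Fm) (Γ Δ : List Fm) : EDeriv Γ Δ → EDeriv (A :: Γ) Δ
  | wR (A : Fm) (Γ Δ : List Fm) : EDeriv Γ Δ → EDeriv Γ (A :: Δ)
  | cL (A : Fm) (Γ Δ : List Fm) : EDeriv (A :: A :: Γ) Δ → EDeriv (A :: Γ) Δ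
  | cR (A : Fm) (Γ Δ : List Fm) : EDeriv Γ (A :: A :: Δ) → EDeriv Γ (A :: Δ)
  | cut (A : Fm) (Γ₁ Δ₁ Γ₂ Δ₂ : List Fm) :
      EDeriv Γ₁ (A :: Δ₁) → EDeriv (A :: Γ₂) Δ₂ →
      EDeriv (Γ₁ ++ Γ₂) (Δ₁ ++ Δ₂)
  | allL (t : Tm) (A : Fm) (Γ Δ : List Fm) :
      EDeriv (inst0 A t :: Γ) Δ →
      EDeriv (inst0 A (Tm.eps (Fm.not A)) :: Γ) Δ
  | exR (t : Tm) (A : Fm) (Γ Δ : List Fm) :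
      EDeriv Γ (inst0 A t :: Δ) →
      EDeriv Γ (inst0 A (Tm.eps A) :: Δ)
  | subst (a : ℕ) (t : Tm) (Γ Δ : List Fm) :
      EDeriv Γ Δ → EDeriv (Γ.map (sfvF a t)) (Δ.map (sfvF a t))
  | permL (Γ Γ' Δ : List Fm) : Γ.Perm Γ' → EDeriv Γ Δ → EDeriv Γ' Δ
  | permR (Γ Δ Δ' : List Fm) : Δ.Perm Δ' → EDeriv Γ Δ → EDeriv Γ Δ'

namespace EDeriv

/-- the size of an Lε derivation -/
def size : ∀ {Γ Δ}, EDeriv Γ Δ → ℕ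
  | _, _, ax _ _ => 1
  | _, _, andL _ _ _ _ d => d.size + 1
  | _, _, andR _ _ _ _ _ _ d e => d.size + e.size + 1
  | _, _, orL _ _ _ _ _ _ d e => d.size + e.size + 1
  | _, _, orR _ _ _ _ d => d.size + 1
  | _, _, impL _ _ _ _ _ _ d e => d.size + e.size + 1
  | _, _, impR _ _ _ _ d => d.size + 1
  | _, _, notL _ _ _ d => d.size + 1
  | _, _, notR _ _ _ d => d.size + 1
  | _, _, wL _ _ _ d => d.size + 1
  | _, _, wR _ _ _ d => d.size + 1
  | _, _, cL _ _ _ d => d.size + 1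
  | _, _, cR _ _ _ d => d.size + 1
  | _, _, cut _ _ _ _ _ d e => d.size + e.size + 1
  | _, _, allL _ _ _ _ d => d.size + 1
  | _, _, exR _ _ _ _ d => d.size + 1
  | _, _, subst _ _ _ _ d => d.size + 1
  | _, _, permL _ _ _ _ d => d.size + 1
  | _, _, permR _ _ _ _ d => d.size + 1

/-- the list of cut formulas occurring in an Lε derivation -/
def cutFms : ∀ {Γ Δ}, EDeriv Γ Δ → List Fm
  | _, _, ax _ _ => []
  | _, _, andL _ _ _ _ d => d.cutFms
  | _, _, andR _ _ _ _ _ _ d e => d.cutFms ++ e.cutFms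
  | _, _, orL _ _ _ _ _ _ d e => d.cutFms ++ e.cutFms
  | _, _, orR _ _ _ _ d => d.cutFms
  | _, _, impL _ _ _ _ _ _ d e => d.cutFms ++ e.cutFms
  | _, _, impR _ _ _ _ d => d.cutFms
  | _, _, notL _ _ _ d => d.cutFms
  | _, _, notR _ _ _ d => d.cutFms
  | _, _, wL _ _ _ d => d.cutFms
  | _, _, wR _ _ _ d => d.cutFms
  | _, _, cL _ _ _ d => d.cutFms
  | _, _, cR _ _ _ d => d.cutFms
  | _, _, cut A _ _ _ _ d e => A :: (d.cutFms ++ e.cutFms)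
  | _, _, allL _ _ _ _ d => d.cutFms
  | _, _, exR _ _ _ _ d => d.cutFms
  | _, _, subst _ _ _ _ d => d.cutFms
  | _, _, permL _ _ _ _ d => d.cutFms
  | _, _, permR _ _ _ _ d => d.cutFms

end EDeriv

/-! ## Elementary functions and polynomial bounds -/

/-- `iterExp k n` is the `k`-fold iterated exponential 2^2^...^n. -/
def iterExp : ℕ → ℕ → ℕ
  | 0, n => n
  | k+1, n => 2 ^ iterExp k n

/-- A function ℕ → ℕ is elementary (in the sense of Kalmár: definable by a
quantifier-free formula from +, ×, and x ↦ 2^x) iff it is majorized by some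
fixed iterated exponential; we use this growth-rate characterization. -/
def IsElementary (f : ℕ → ℕ) : Prop := ∃ k, ∀ n, f n ≤ iterExp k n

/-- `g` is polynomially bounded -/
def PolyBdd (g : ℕ → ℕ) : Prop := ∃ p : Polynomial ℕ, ∀ n, g n ≤ p.eval n

/-! ## Skolemization (relationally): `SkP F A B` (`SkN F A B`) holds if `B` is
obtained from `A`, occurring in the succedent (antecedent), by replacing the
strong quantifiers by terms built from fresh function symbols in `F`. -/
mutual
inductive SkP (F : ℕ → Prop) : Fm → Fm → Prop where
  | atom (p ts) : SkP F (Fm.atom p ts) (Fm.atom p ts)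
  | and {A A' B B'} : SkP F A A' → SkP F B B' → SkP F (Fm.and A B) (Fm.and A' B')
  | or {A A' B B'} : SkP F A A' → SkP F B B' → SkP F (Fm.or A B) (Fm.or A' B')
  | imp {A A' B B'} : SkN F A A' → SkP F B B' → SkP F (Fm.imp A B) (Fm.imp A' B')
  | not {A A'} : SkN F A A' → SkP F (Fm.not A) (Fm.not A')
  | ex {A A'} : SkP F A A' → SkP F (Fm.ex A) (Fm.ex A')
  | all {A B} (f : ℕ) (ts : Tms) : F f →
      SkP F (inst0 A (Tm.func f ts)) B → SkP F (Fm.all A) B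
inductive SkN (F : ℕ → Prop) : Fm → Fm → Prop where
  | atom (p ts) : SkN F (Fm.atom p ts) (Fm.atom p ts)
  | and {A A' B B'} : SkN F A A' → SkN F B B' → SkN F (Fm.and A B) (Fm.and A' B')
  | or {A A' B B'} : SkN F A A' → SkN F B B' → SkN F (Fm.or A B) (Fm.or A' B')
  | imp {A A' B B'} : SkP F A A' → SkN F B B' → SkN F (Fm.imp A B) (Fm.imp A' B')
  | not {A A'} : SkP F A A' → SkN F (Fm.not A) (Fm.not A')
  | all {A A'} : SkN F A A' → SkN F (Fm.all A) (Fm.all A')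
  | ex {A B} (f : ℕ) (ts : Tms) : F f →
      SkN F (inst0 A (Tm.func f ts)) B → SkN F (Fm.ex A) B
end

/-- `S'` is a Skolemization of the sequent `S` using fresh function symbols from `F` -/
def SkolemSeq (F : ℕ → Prop) (S S' : List Fm × List Fm) : Prop :=
  List.Forall₂ (SkN F) S.1 S'.1 ∧ List.Forall₂ (SkP F) S.2 S'.2




/-! ## Part 1: substitution lemmas -/
mutual
theorem lift_liftT (j k : ℕ) (h : j ≤ k) : ∀ t, liftT (k+1) (liftT j t) = liftT j (liftT k t)
  | .bvar n => by
      simp only [liftT]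
      split_ifs <;> simp only [liftT] <;> split_ifs <;> first | rfl | omega
  | .fvar a => by simp only [liftT]
  | .func f ts => by simp only [liftT, lift_liftTs j k h ts]
  | .eps A => by simp only [liftT, lift_liftF (j+1) (k+1) (by omega) A]
theorem lift_liftTs (j k : ℕ) (h : j ≤ k) : ∀ t, liftTs (k+1) (liftTs j t) = liftTs j (liftTs k t)
  | .nil => by simp only [liftTs]
  | .cons t ts => by simp only [liftTs, lift_liftT j k h t, lift_liftTs j k h ts]
theorem lift_liftF (j k : ℕ) (h : j ≤ k) : ∀ t, liftF (k+1) (liftF j t) = liftF j (liftF k t)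
  | .atom p ts => by simp only [liftF, lift_liftTs j k h ts]
  | .and A B => by simp only [liftF, lift_liftF j k h A, lift_liftF j k h B]
  | .or A B => by simp only [liftF, lift_liftF j k h A, lift_liftF j k h B]
  | .imp A B => by simp only [liftF, lift_liftF j k h A, lift_liftF j k h B]
  | .not A => by simp only [liftF, lift_liftF j k h A]
  | .all A => by simp only [liftF, lift_liftF (j+1) (k+1) (by omega) A]
  | .ex A => by simp only [liftF, lift_liftF (j+1) (k+1) (by omega) A]
end

mutual
theorem sub_liftT (k : ℕ) (u : Tm) : ∀ t, subT k u (liftT k t) = t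
  | .bvar n => by
      simp only [liftT]
      split_ifs <;> simp only [subT] <;> split_ifs <;> first | rfl | omega
  | .fvar a => by simp only [liftT, subT]
  | .func f ts => by simp only [liftT, subT, sub_liftTs k u ts]
  | .eps A => by simp only [liftT, subT, sub_liftF (k+1) (liftT 0 u) A]
theorem sub_liftTs (k : ℕ) (u : Tm) : ∀ t, subTs k u (liftTs k t) = t
  | .nil => by simp only [liftTs, subTs]
  | .cons t ts => by simp only [liftTs, subTs, sub_liftT k u t, sub_liftTs k u ts]
theorem sub_liftF (k : ℕ) (u : Tm) : ∀ t, subF k u (liftF k t) = t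
  | .atom p ts => by simp only [liftF, subF, sub_liftTs k u ts]
  | .and A B => by simp only [liftF, subF, sub_liftF k u A, sub_liftF k u B]
  | .or A B => by simp only [liftF, subF, sub_liftF k u A, sub_liftF k u B]
  | .imp A B => by simp only [liftF, subF, sub_liftF k u A, sub_liftF k u B]
  | .not A => by simp only [liftF, subF, sub_liftF k u A]
  | .all A => by simp only [liftF, subF, sub_liftF (k+1) (liftT 0 u) A]
  | .ex A => by simp only [liftF, subF, sub_liftF (k+1) (liftT 0 u) A]
end

mutual
theorem lift_subT (j k : ℕ) (h : j ≤ k) (u : Tm) :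
    ∀ t, subT (k+1) (liftT j u) (liftT j t) = liftT j (subT k u t)
  | .bvar n => by
      simp only [liftT, subT]
      split_ifs <;> simp only [liftT, subT] <;> split_ifs <;>
        first | rfl | omega | (congr 1; omega)
  | .fvar a => by simp only [liftT, subT]
  | .func f ts => by simp only [liftT, subT, lift_subTs j k h u ts]
  | .eps A => by
      simp only [liftT, subT, ← lift_subF (j+1) (k+1) (by omega) (liftT 0 u) A,
        lift_liftT 0 j (Nat.zero_le _) u]
theorem lift_subTs (j k : ℕ) (h : j ≤ k) (u : Tm) :
    ∀ t, subTs (k+1) (liftT j u) (liftTs j t) = liftTs j (subTs k u t)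
  | .nil => by simp only [liftTs, subTs]
  | .cons t ts => by simp only [liftTs, subTs, lift_subT j k h u t, lift_subTs j k h u ts]
theorem lift_subF (j k : ℕ) (h : j ≤ k) (u : Tm) :
    ∀ t, subF (k+1) (liftT j u) (liftF j t) = liftF j (subF k u t)
  | .atom p ts => by simp only [liftF, subF, lift_subTs j k h u ts]
  | .and A B => by simp only [liftF, subF, lift_subF j k h u A, lift_subF j k h u B]
  | .or A B => by simp only [liftF, subF, lift_subF j k h u A, lift_subF j k h u B]
  | .imp A B => by simp only [liftF, subF, lift_subF j k h u A, lift_subF j k h u B]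
  | .not A => by simp only [liftF, subF, lift_subF j k h u A]
  | .all A => by
      simp only [liftF, subF, ← lift_subF (j+1) (k+1) (by omega) (liftT 0 u) A,
        lift_liftT 0 j (Nat.zero_le _) u]
  | .ex A => by
      simp only [liftF, subF, ← lift_subF (j+1) (k+1) (by omega) (liftT 0 u) A,
        lift_liftT 0 j (Nat.zero_le _) u]
end

mutual
theorem sub_subT (j k : ℕ) (h : j ≤ k) (u v : Tm) :
    ∀ t, subT k u (subT j v t) = subT j (subT k u v) (subT (k+1) (liftT j u) t)
  | .bvar n => by
      simp only [subT]
      split_ifs <;> simp only [subT, sub_liftT] <;> (try split_ifs) <;> first | rfl | omega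
  | .fvar a => by simp only [subT]
  | .func f ts => by simp only [subT, sub_subTs j k h u v ts]
  | .eps A => by
      simp only [subT, sub_subF (j+1) (k+1) (by omega) (liftT 0 u) (liftT 0 v) A,
        lift_liftT 0 j (Nat.zero_le _) u, lift_subT 0 k (Nat.zero_le _) u v]
theorem sub_subTs (j k : ℕ) (h : j ≤ k) (u v : Tm) :
    ∀ t, subTs k u (subTs j v t) = subTs j (subT k u v) (subTs (k+1) (liftT j u) t)
  | .nil => by simp only [subTs]
  | .cons t ts => by simp only [subTs, sub_subT j k h u v t, sub_subTs j k h u v ts]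
theorem sub_subF (j k : ℕ) (h : j ≤ k) (u v : Tm) :
    ∀ t, subF k u (subF j v t) = subF j (subT k u v) (subF (k+1) (liftT j u) t)
  | .atom p ts => by simp only [subF, sub_subTs j k h u v ts]
  | .and A B => by simp only [subF, sub_subF j k h u v A, sub_subF j k h u v B]
  | .or A B => by simp only [subF, sub_subF j k h u v A, sub_subF j k h u v B]
  | .imp A B => by simp only [subF, sub_subF j k h u v A, sub_subF j k h u v B]
  | .not A => by simp only [subF, sub_subF j k h u v A]
  | .all A => by
      simp only [subF, sub_subF (j+1) (k+1) (by omega) (liftT 0 u) (liftT 0 v) A,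
        lift_liftT 0 j (Nat.zero_le _) u, lift_subT 0 k (Nat.zero_le _) u v]
  | .ex A => by
      simp only [subF, sub_subF (j+1) (k+1) (by omega) (liftT 0 u) (liftT 0 v) A,
        lift_liftT 0 j (Nat.zero_le _) u, lift_subT 0 k (Nat.zero_le _) u v]
end

theorem epsT_subF : ∀ (A : Fm) (k : ℕ) (u : Tm), epsT (subF k u A) = subF k u (epsT A)
  | .atom p ts, k, u => by simp only [subF, epsT]
  | .and A B, k, u => by simp only [subF, epsT, epsT_subF A, epsT_subF B]
  | .or A B, k, u => by simp only [subF, epsT, epsT_subF A, epsT_subF B]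
  | .imp A B, k, u => by simp only [subF, epsT, epsT_subF A, epsT_subF B]
  | .not A, k, u => by simp only [subF, epsT, epsT_subF A]
  | .all A, k, u => by
      simp only [subF, epsT, epsT_subF A, inst0]
      rw [sub_subF 0 k (Nat.zero_le _)]
      simp only [subT, subF]
  | .ex A, k, u => by
      simp only [subF, epsT, epsT_subF A, inst0]
      rw [sub_subF 0 k (Nat.zero_le _)]
      simp only [subT]

mutual
theorem posW_subF : ∀ (A : Fm) (k : ℕ) (u : Tm), posW (subF k u A) = posW A
  | .atom p ts, k, u => by simp only [subF, posW]
  | .and A B, k, u => by simp only [subF, posW, posW_subF A, posW_subF B]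
  | .or A B, k, u => by simp only [subF, posW, posW_subF A, posW_subF B]
  | .imp A B, k, u => by simp only [subF, posW, negW_subF A, posW_subF B]
  | .not A, k, u => by simp only [subF, posW, negW_subF A]
  | .all A, k, u => by simp only [subF, posW]
  | .ex A, k, u => by simp only [subF, posW, posW_subF A]
theorem negW_subF : ∀ (A : Fm) (k : ℕ) (u : Tm), negW (subF k u A) = negW A
  | .atom p ts, k, u => by simp only [subF, negW]
  | .and A B, k, u => by simp only [subF, negW, negW_subF A, negW_subF B]
  | .or A B, k, u => by simp only [subF, negW, negW_subF A, negW_subF B]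
  | .imp A B, k, u => by simp only [subF, negW, posW_subF A, negW_subF B]
  | .not A, k, u => by simp only [subF, negW, posW_subF A]
  | .all A, k, u => by simp only [subF, negW, negW_subF A]
  | .ex A, k, u => by simp only [subF, negW]
end

/-! ## Part 2: the sequents -/

def zeroT : Tm := .func 0 .nil
def sT (t : Tm) : Tm := .func 1 (.cons t .nil)
def pT (y x z : Tm) : Tm := .func 2 (.cons y (.cons x (.cons z .nil)))
def fT (a b c : Tm) : Tm := .func 3 (.cons a (.cons b (.cons c .nil)))
def TT (a : Tm) : Fm := .atom 0 (.cons a .nil)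
def QQ (k x : Tm) : Fm := .atom 1 (.cons k (.cons x .nil))
def numT : ℕ → Tm
  | 0 => zeroT
  | n+1 => sT (numT n)

def X1 : Fm := .all (TT (pT (.bvar 0) zeroT (sT (.bvar 0))))
def X2 : Fm := .all (.all (.all (.all
  (.imp (TT (pT (.bvar 3) (.bvar 2) (.bvar 1)))
    (.imp (TT (pT (.bvar 1) (.bvar 2) (.bvar 0)))
      (TT (pT (.bvar 3) (sT (.bvar 2)) (.bvar 0))))))))
def X3 : Fm := .all (.all (.all
  (.imp (.imp (TT (.bvar 2)) (.and (TT (.bvar 1)) (TT (.bvar 0))))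
    (TT (fT (.bvar 2) (.bvar 1) (.bvar 0))))))
def X4 : Fm := .all (.all (.all
  (.imp (TT (fT (.bvar 2) (.bvar 1) (.bvar 0)))
    (.imp (TT (.bvar 2)) (.and (TT (.bvar 1)) (TT (.bvar 0)))))))
def X5 : Fm := QQ zeroT zeroT
def X6 : Fm := .all (.all (.all
  (.imp (QQ (.bvar 2) (.bvar 1))
    (.imp (TT (pT zeroT (.bvar 1) (.bvar 0))) (QQ (sT (.bvar 2)) (.bvar 0))))))
def X7 : Fm := TT zeroT

def Axs : List Fm := [X1, X2, X3, X4, X5, X6, X7]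
def Goal (n : ℕ) : Fm := .ex (QQ (numT n) (.bvar 0))

/-! ## Part 3: the lower bound for cut-free LK -/

def Pm (V : ℕ → Prop) (y m z : ℕ) : Prop := z = y + 2 ^ m ∧ ∀ j < 2 ^ m, V (y + j)
def Qm (V : ℕ → Prop) (k x : ℕ) : Prop := x = iterExp k 0 ∧ ∀ j < x, V j

def funI (V : ℕ → Prop) : ℕ → List (ℕ × Prop) → ℕ × Prop
  | 0, [] => (0, True)
  | 1, [a] => (a.1 + 1, False)
  | 2, [y, x, z] => (0, Pm V y.1 x.1 z.1)
  | 3, [a, b, c] => (0, a.2 → b.2 ∧ c.2)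
  | _, _ => (0, False)

def predI (V : ℕ → Prop) : ℕ → List (ℕ × Prop) → Prop
  | 0, [a] => a.2
  | 1, [k, x] => Qm V k.1 x.1
  | _, _ => False

mutual
def evT (V : ℕ → Prop) (e : ℕ → ℕ × Prop) : Tm → ℕ × Prop
  | .bvar n => e n
  | .fvar _ => (0, False)
  | .func f ts => funI V f (evTs V e ts)
  | .eps _ => (0, False)
def evTs (V : ℕ → Prop) (e : ℕ → ℕ × Prop) : Tms → List (ℕ × Prop)
  | .nil => []
  | .cons t ts => evT V e t :: evTs V e ts
end

def insE (k : ℕ) (d : ℕ × Prop) (e : ℕ → ℕ × Prop) : ℕ → ℕ × Prop :=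
  fun n => if n = k then d else if n < k then e n else e (n - 1)

def Sat (V : ℕ → Prop) : (ℕ → ℕ × Prop) → Fm → Prop
  | e, .atom p ts => predI V p (evTs V e ts)
  | e, .and A B => Sat V e A ∧ Sat V e B
  | e, .or A B => Sat V e A ∨ Sat V e B
  | e, .imp A B => Sat V e A → Sat V e B
  | e, .not A => ¬ Sat V e A
  | e, .all A => ∀ d : ℕ × Prop, V d.1 → Sat V (insE 0 d e) A
  | e, .ex A => ∃ d : ℕ × Prop, V d.1 ∧ Sat V (insE 0 d e) A

mutual
theorem ev_sub (V : ℕ → Prop) (e : ℕ → ℕ × Prop) (k : ℕ) (u : Tm) :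
    ∀ t, evT V e (subT k u t) = evT V (insE k (evT V e u) e) t
  | .bvar n => by
      simp only [subT, evT, insE]
      split_ifs <;> simp only [evT]
  | .fvar a => by simp only [subT, evT]
  | .func f ts => by simp only [subT, evT, ev_subs V e k u ts]
  | .eps A => by simp only [subT, evT]
theorem ev_subs (V : ℕ → Prop) (e : ℕ → ℕ × Prop) (k : ℕ) (u : Tm) :
    ∀ t, evTs V e (subTs k u t) = evTs V (insE k (evT V e u) e) t
  | .nil => by simp only [subTs, evTs]
  | .cons t ts => by simp only [subTs, evTs, ev_sub V e k u t, ev_subs V e k u ts]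
end

mutual
theorem ev_lift (V : ℕ → Prop) (e : ℕ → ℕ × Prop) (d : ℕ × Prop) :
    ∀ t, evT V (insE 0 d e) (liftT 0 t) = evT V e t
  | .bvar n => by simp [liftT, evT, insE]
  | .fvar a => by simp only [liftT, evT]
  | .func f ts => by simp only [liftT, evT, ev_lifts V e d ts]
  | .eps A => by simp only [liftT, evT]
theorem ev_lifts (V : ℕ → Prop) (e : ℕ → ℕ × Prop) (d : ℕ × Prop) :
    ∀ t, evTs V (insE 0 d e) (liftTs 0 t) = evTs V e t
  | .nil => by simp only [liftTs, evTs]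
  | .cons t ts => by simp only [liftTs, evTs, ev_lift V e d t, ev_lifts V e d ts]
end

theorem insE_comm (k : ℕ) (d a : ℕ × Prop) (e : ℕ → ℕ × Prop) :
    insE (k+1) d (insE 0 a e) = insE 0 a (insE k d e) := by
  funext n
  rcases n with _ | n
  · simp [insE]
  · rcases n with _ | n
    · rcases k with _ | k <;> simp [insE]
    · simp [insE]

theorem sat_sub (V : ℕ → Prop) : ∀ (A : Fm) (e : ℕ → ℕ × Prop) (k : ℕ) (u : Tm),
    Sat V e (subF k u A) ↔ Sat V (insE k (evT V e u) e) A
  | .atom p ts, e, k, u => by simp only [subF, Sat, ev_subs]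
  | .and A B, e, k, u => by simp only [subF, Sat, sat_sub V A, sat_sub V B]
  | .or A B, e, k, u => by simp only [subF, Sat, sat_sub V A, sat_sub V B]
  | .imp A B, e, k, u => by simp only [subF, Sat, sat_sub V A, sat_sub V B]
  | .not A, e, k, u => by simp only [subF, Sat, sat_sub V A]
  | .all A, e, k, u => by simp only [subF, Sat, sat_sub V A, ev_lift, insE_comm]
  | .ex A, e, k, u => by simp only [subF, Sat, sat_sub V A, ev_lift, insE_comm]

theorem funI_fst (V V' : ℕ → Prop) (f : ℕ) (l l' : List (ℕ × Prop))
    (h : l.map Prod.fst = l'.map Prod.fst) : (funI V f l).1 = (funI V' f l').1 := by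
  have hl : l.length = l'.length := by simpa using congrArg List.length h
  rcases l with _ | ⟨a, _ | ⟨b, _ | ⟨c, _ | ⟨g, l⟩⟩⟩⟩ <;>
    rcases l' with _ | ⟨a', _ | ⟨b', _ | ⟨c', _ | ⟨g', l'⟩⟩⟩⟩ <;>
    first
    | (exfalso; simp at hl; done)
    | (rcases f with _ | _ | _ | _ | f <;> simp_all [funI])

mutual
theorem ev_fst (V V' : ℕ → Prop) (e : ℕ → ℕ × Prop) :
    ∀ t, (evT V e t).1 = (evT V' e t).1
  | .bvar n => by simp only [evT]
  | .fvar a => by simp only [evT]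
  | .func f ts => by
      simp only [evT]
      exact funI_fst _ _ _ _ _ (evs_fst V V' e ts)
  | .eps A => by simp only [evT]
theorem evs_fst (V V' : ℕ → Prop) (e : ℕ → ℕ × Prop) :
    ∀ t, (evTs V e t).map Prod.fst = (evTs V' e t).map Prod.fst
  | .nil => by simp only [evTs]
  | .cons t ts => by simp only [evTs, List.map_cons, ev_fst V V' e t, evs_fst V V' e ts]
end

def e0 : ℕ → ℕ × Prop := fun _ => (0, False)

/-- soundness of a sequent in the model restricted to the terms of `l` -/
def Snd (l : List Tm) (Γ Δ : List Fm) : Prop :=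
  ∀ V : ℕ → Prop, (∀ t ∈ l, V (evT V e0 t).1) → (∀ A ∈ Γ, Sat V e0 A) → ∃ B ∈ Δ, Sat V e0 B

theorem sound {Γ Δ : List Fm} (d : Deriv Γ Δ) : d.cutFms = [] → WeakSeq Γ Δ →
    ∃ l : List Tm, l.length ≤ d.size ∧ Snd l Γ Δ := by
  induction d with
  | ax A =>
      intro _ _
      exact ⟨[], by simp, fun V _ h => ⟨A, by simp, h A (by simp)⟩⟩
  | andL A B Γ Δ d ih =>
      intro hc hw
      obtain ⟨l, hl, hs⟩ := ih hc (by
        simp only [WeakSeq, List.forall_mem_cons, negW, Bool.and_eq_true] at hw ⊢; tauto)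
      refine ⟨l, by simp only [Deriv.size]; omega, fun V hV h => hs V hV ?_⟩
      simp only [List.forall_mem_cons, Sat] at h ⊢; tauto
  | andR A B Γ₁ Δ₁ Γ₂ Δ₂ d e ih1 ih2 =>
      intro hc hw
      simp only [Deriv.cutFms, List.append_eq_nil_iff] at hc
      simp only [WeakSeq, List.forall_mem_cons, List.forall_mem_append, posW,
        Bool.and_eq_true] at hw
      obtain ⟨l, hl, hs⟩ := ih1 hc.1 (by simp only [WeakSeq, List.forall_mem_cons]; tauto)
      obtain ⟨m, hm, hs'⟩ := ih2 hc.2 (by simp only [WeakSeq, List.forall_mem_cons]; tauto)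
      refine ⟨l ++ m, by simp only [Deriv.size, List.length_append]; omega, fun V hV h => ?_⟩
      simp only [List.forall_mem_append] at hV h
      have h1 := hs V hV.1 h.1
      have h2 := hs' V hV.2 h.2
      simp only [List.exists_mem_cons_iff, Sat, List.mem_append, or_and_right, exists_or]
        at h1 h2 ⊢
      rcases h1 with h1 | h1
      · rcases h2 with h2 | h2
        · exact Or.inl ⟨h1, h2⟩
        · exact Or.inr (Or.inr h2)
      · exact Or.inr (Or.inl h1)
  | orL A B Γ₁ Δ₁ Γ₂ Δ₂ d e ih1 ih2 =>
      intro hc hw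
      simp only [Deriv.cutFms, List.append_eq_nil_iff] at hc
      simp only [WeakSeq, List.forall_mem_cons, List.forall_mem_append, negW,
        Bool.and_eq_true] at hw
      obtain ⟨l, hl, hs⟩ := ih1 hc.1 (by simp only [WeakSeq, List.forall_mem_cons]; tauto)
      obtain ⟨m, hm, hs'⟩ := ih2 hc.2 (by simp only [WeakSeq, List.forall_mem_cons]; tauto)
      refine ⟨l ++ m, by simp only [Deriv.size, List.length_append]; omega, fun V hV h => ?_⟩
      simp only [List.forall_mem_append, List.forall_mem_cons, Sat] at hV h
      have h1 := hs V hV.1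
      have h2 := hs' V hV.2
      simp only [List.forall_mem_cons, List.mem_append, or_and_right, exists_or]
        at h1 h2 ⊢
      rcases h.1 with h3 | h3
      · exact Or.inl (h1 ⟨h3, h.2.1⟩)
      · exact Or.inr (h2 ⟨h3, h.2.2⟩)
  | orR A B Γ Δ d ih =>
      intro hc hw
      obtain ⟨l, hl, hs⟩ := ih hc (by
        simp only [WeakSeq, List.forall_mem_cons, posW, Bool.and_eq_true] at hw ⊢; tauto)
      refine ⟨l, by simp only [Deriv.size]; omega, fun V hV h => ?_⟩
      have := hs V hV h
      simp only [List.exists_mem_cons_iff, Sat] at this ⊢; tauto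
  | impL A B Γ₁ Δ₁ Γ₂ Δ₂ d e ih1 ih2 =>
      intro hc hw
      simp only [Deriv.cutFms, List.append_eq_nil_iff] at hc
      simp only [WeakSeq, List.forall_mem_cons, List.forall_mem_append, negW,
        Bool.and_eq_true] at hw
      obtain ⟨l, hl, hs⟩ := ih1 hc.1 (by simp only [WeakSeq, List.forall_mem_cons]; tauto)
      obtain ⟨m, hm, hs'⟩ := ih2 hc.2 (by simp only [WeakSeq, List.forall_mem_cons]; tauto)
      refine ⟨l ++ m, by simp only [Deriv.size, List.length_append]; omega, fun V hV h => ?_⟩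
      simp only [List.forall_mem_append, List.forall_mem_cons, Sat] at hV h
      have h1 := hs V hV.1
      have h2 := hs' V hV.2
      simp only [List.forall_mem_cons, List.exists_mem_cons_iff, List.mem_append, or_and_right,
        exists_or] at h1 h2 ⊢
      rcases h1 h.2.1 with h3 | h3
      · exact Or.inr (h2 ⟨h.1 h3, h.2.2⟩)
      · exact Or.inl h3
  | impR A B Γ Δ d ih =>
      intro hc hw
      obtain ⟨l, hl, hs⟩ := ih hc (by
        simp only [WeakSeq, List.forall_mem_cons, posW, Bool.and_eq_true] at hw ⊢; tauto)
      refine ⟨l, by simp only [Deriv.size]; omega, fun V hV h => ?_⟩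
      have h1 := hs V hV
      simp only [List.exists_mem_cons_iff, List.forall_mem_cons, Sat] at h1 ⊢
      by_cases h2 : Sat V e0 A
      · rcases h1 ⟨h2, h⟩ with h3 | h3
        · exact Or.inl fun _ => h3
        · exact Or.inr h3
      · exact Or.inl fun h3 => absurd h3 h2
  | notL A Γ Δ d ih =>
      intro hc hw
      obtain ⟨l, hl, hs⟩ := ih hc (by
        simp only [WeakSeq, List.forall_mem_cons, negW] at hw ⊢; tauto)
      refine ⟨l, by simp only [Deriv.size]; omega, fun V hV h => ?_⟩
      have h1 := hs V hV
      simp only [List.exists_mem_cons_iff, List.forall_mem_cons, Sat] at h1 h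
      exact (h1 h.2).resolve_left h.1
  | notR A Γ Δ d ih =>
      intro hc hw
      obtain ⟨l, hl, hs⟩ := ih hc (by
        simp only [WeakSeq, List.forall_mem_cons, posW] at hw ⊢; tauto)
      refine ⟨l, by simp only [Deriv.size]; omega, fun V hV h => ?_⟩
      have h1 := hs V hV
      simp only [List.exists_mem_cons_iff, List.forall_mem_cons, Sat] at h1 ⊢
      by_cases h2 : Sat V e0 A
      · exact Or.inr (h1 ⟨h2, h⟩)
      · exact Or.inl h2
  | wL A Γ Δ d ih =>
      intro hc hw
      obtain ⟨l, hl, hs⟩ := ih hc (by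
        simp only [WeakSeq, List.forall_mem_cons] at hw ⊢; tauto)
      refine ⟨l, by simp only [Deriv.size]; omega, fun V hV h => hs V hV ?_⟩
      simp only [List.forall_mem_cons] at h; tauto
  | wR A Γ Δ d ih =>
      intro hc hw
      obtain ⟨l, hl, hs⟩ := ih hc (by
        simp only [WeakSeq, List.forall_mem_cons] at hw ⊢; tauto)
      refine ⟨l, by simp only [Deriv.size]; omega, fun V hV h => ?_⟩
      have := hs V hV h
      simp only [List.exists_mem_cons_iff] at this ⊢; tauto
  | cL A Γ Δ d ih =>
      intro hc hw
      obtain ⟨l, hl, hs⟩ := ih hc (by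
        simp only [WeakSeq, List.forall_mem_cons] at hw ⊢; tauto)
      refine ⟨l, by simp only [Deriv.size]; omega, fun V hV h => hs V hV ?_⟩
      simp only [List.forall_mem_cons] at h ⊢; tauto
  | cR A Γ Δ d ih =>
      intro hc hw
      obtain ⟨l, hl, hs⟩ := ih hc (by
        simp only [WeakSeq, List.forall_mem_cons] at hw ⊢; tauto)
      refine ⟨l, by simp only [Deriv.size]; omega, fun V hV h => ?_⟩
      have := hs V hV h
      simp only [List.exists_mem_cons_iff] at this ⊢; tauto
  | cut A Γ₁ Δ₁ Γ₂ Δ₂ d e ih1 ih2 =>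
      intro hc hw
      simp [Deriv.cutFms] at hc
  | allL t A Γ Δ d ih =>
      intro hc hw
      obtain ⟨l, hl, hs⟩ := ih hc (by
        simp only [WeakSeq, List.forall_mem_cons, negW, inst0, negW_subF] at hw ⊢; tauto)
      refine ⟨t :: l, by simp only [Deriv.size, List.length_cons]; omega, fun V hV h => ?_⟩
      simp only [List.forall_mem_cons, Sat] at hV h
      refine hs V hV.2 ?_
      simp only [List.forall_mem_cons, inst0, sat_sub]
      exact ⟨h.1 _ hV.1, h.2⟩
  | allR a A Γ Δ d ih =>
      intro hc hw
      simp [WeakSeq, posW] at hw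
  | exL a A Γ Δ d ih =>
      intro hc hw
      simp [WeakSeq, negW] at hw
  | exR t A Γ Δ d ih =>
      intro hc hw
      obtain ⟨l, hl, hs⟩ := ih hc (by
        simp only [WeakSeq, List.forall_mem_cons, posW, inst0, posW_subF] at hw ⊢; tauto)
      refine ⟨t :: l, by simp only [Deriv.size, List.length_cons]; omega, fun V hV h => ?_⟩
      simp only [List.forall_mem_cons] at hV
      have h1 := hs V hV.2 h
      simp only [List.exists_mem_cons_iff, inst0, sat_sub, Sat] at h1 ⊢
      rcases h1 with h1 | h1
      · exact Or.inl ⟨_, hV.1, h1⟩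
      · exact Or.inr h1
  | permL Γ Γ' Δ hp d ih =>
      intro hc hw
      obtain ⟨l, hl, hs⟩ := ih hc ⟨fun A hA => hw.1 A (hp.subset hA), hw.2⟩
      exact ⟨l, by simp only [Deriv.size]; omega,
        fun V hV h => hs V hV fun A hA => h A (hp.subset hA)⟩
  | permR Γ Δ Δ' hp d ih =>
      intro hc hw
      obtain ⟨l, hl, hs⟩ := ih hc ⟨hw.1, fun A hA => hw.2 A (hp.subset hA)⟩
      refine ⟨l, by simp only [Deriv.size]; omega, fun V hV h => ?_⟩
      obtain ⟨B, hB, hB'⟩ := hs V hV h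
      exact ⟨B, hp.subset hB, hB'⟩

theorem ev_num (V : ℕ → Prop) (e : ℕ → ℕ × Prop) (n : ℕ) : (evT V e (numT n)).1 = n := by
  induction n with
  | zero => simp [numT, zeroT, evT, evTs, funI]
  | succ n ih => simp [numT, sT, evT, evTs, funI, ih]

theorem axs_sat (V : ℕ → Prop) : ∀ A ∈ Axs, Sat V e0 A := by
  simp only [Axs, List.forall_mem_cons, X1, X2, X3, X4, X5, X6, X7, Sat, TT, QQ, predI, evTs, evT,
    zeroT, sT, pT, fT, funI, insE]
  refine ⟨?_, ?_, ?_, ?_, ?_, ?_, trivial, by simp⟩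
  · intro d hd
    simp only [Pm, if_true]
    refine ⟨by simp, ?_⟩
    intro j hj
    have : j = 0 := by simpa using hj
    subst this; simpa using hd
  · intro y _ x _ z _ w _
    simp only [Pm]
    norm_num
    rintro h1 h2 h3 h4
    rw [h1] at h3 h4
    refine ⟨by rw [h3]; ring, fun j hj => ?_⟩
    by_cases h : j < 2 ^ x.1
    · exact h2 j h
    · have := h4 (j - 2 ^ x.1) (by rw [pow_succ] at hj; omega)
      have e : y.1 + 2 ^ x.1 + (j - 2 ^ x.1) = y.1 + j := by omega
      rwa [e] at this
  · intro a _ b _ c _; exact id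
  · intro a _ b _ c _; exact id
  · simp [Qm, iterExp]
  · intro k _ x _ z _
    simp only [Pm, Qm]
    norm_num
    rintro h1 h2 h3 h4
    rw [h1] at h3 h4
    exact ⟨by rw [h3, iterExp], fun j hj => h4 j (by rw [h3] at hj; exact hj)⟩

theorem lower {n : ℕ} (d : Deriv Axs [Goal n]) (hc : d.cutFms = []) : iterExp n 0 ≤ d.size := by
  obtain ⟨l, hl, hs⟩ := sound d hc (by
    simp [WeakSeq, Axs, X1, X2, X3, X4, X5, X6, X7, Goal, TT, QQ, posW, negW])
  let L : List ℕ := l.map fun t => (evT (fun _ => True) e0 t).1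
  have h := hs (fun k => k ∈ L) (fun t ht => by
    rw [ev_fst _ (fun _ => True)]
    exact List.mem_map_of_mem (f := fun t => (evT (fun _ => True) e0 t).1) ht) (axs_sat _)
  simp only [Goal, List.exists_mem_cons_iff, Sat, QQ, predI, evTs, ev_num, Qm, evT] at h
  rcases h with h | h
  · obtain ⟨a, -, h1, h2⟩ := h
    rw [h1] at h2
    have h3 : (Finset.range (iterExp n 0)) ⊆ L.toFinset := by
      intro j hj
      simpa using h2 j (by simpa using hj)
    have h4 := Finset.card_le_card h3
    have h5 := L.toFinset_card_le
    simp only [Finset.card_range] at h4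
    have h6 : L.length = l.length := by simp [L]
    omega
  · simp at h

theorem iterExp_add (k m n : ℕ) : iterExp (k + m) n = iterExp k (iterExp m n) := by
  induction k with
  | zero => simp [iterExp]
  | succ k ih => rw [Nat.add_right_comm]; simp [iterExp, ih]

theorem iterExp_mono (k : ℕ) {m n : ℕ} (h : m < n) : iterExp k m < iterExp k n := by
  induction k with
  | zero => simpa [iterExp]
  | succ k ih => simp only [iterExp]; exact Nat.pow_lt_pow_right (by norm_num) ih

theorem iterExp_big (m : ℕ) : 2 ^ (m+1) ≤ iterExp (m+2) 0 := by
  induction m with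
  | zero => simp [iterExp]
  | succ m ih =>
      rw [show m + 1 + 2 = (m + 2) + 1 by omega, iterExp]
      refine Nat.pow_le_pow_right (by norm_num) (le_trans ?_ ih)
      have := Nat.lt_two_pow_self (n := m+1)
      omega

theorem not_elem (k : ℕ) : ¬ ∀ i, iterExp i 0 ≤ iterExp k i := by
  intro h
  have h1 := h (k + (k + 2 + 2))
  rw [iterExp_add] at h1
  have h2 := iterExp_big (k+2)
  have h3 := Nat.lt_two_pow_self (n := k+1)
  have h4 : 2 ^ (k + 2 + 1) = 4 * 2 ^ (k+1) := by ring
  have := iterExp_mono k (show k + (k + 2 + 2) < iterExp (k+2+2) 0 by omega)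
  omega

/-! ## Part 4: short cut-free proofs in the epsilon calculus -/

/-- the sequent `Γ ⊢ C` has a cut-free Lε-proof of size at most `N` -/
def Pv (N : ℕ) (Γ : List Fm) (C : Fm) : Prop :=
  ∃ e : EDeriv Γ [C], e.cutFms = [] ∧ e.size ≤ N

theorem Pv.mono {N M : ℕ} {Γ : List Fm} {C : Fm} (h : Pv N Γ C) (hN : N ≤ M) : Pv M Γ C := by
  obtain ⟨e, h1, h2⟩ := h
  exact ⟨e, h1, h2.trans hN⟩

theorem Pv.perm {N : ℕ} {Γ Γ' : List Fm} {C : Fm} (h : Pv N Γ C) (hp : Γ.Perm Γ') :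
    Pv (N+1) Γ' C := by
  obtain ⟨e, h1, h2⟩ := h
  exact ⟨.permL _ _ _ hp e, h1, by simp only [EDeriv.size]; omega⟩

theorem Pv.weak {N : ℕ} {Γ : List Fm} {C : Fm} (h : Pv N Γ C) (Γ' : List Fm) :
    Pv (N + Γ'.length) (Γ' ++ Γ) C := by
  induction Γ' with
  | nil => simpa using h
  | cons A Γ' ih =>
      obtain ⟨e, h1, h2⟩ := ih
      exact ⟨.wL _ _ _ e, h1, by simp only [EDeriv.size, List.length_cons]; omega⟩

theorem Pv.contr {N : ℕ} {Γ : List Fm} {A C : Fm} (hA : A ∈ Γ) (h : Pv N (A :: Γ) C) :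
    Pv (N + 3) Γ C := by
  obtain ⟨s, t, rfl⟩ := List.append_of_mem hA
  have h' : Pv (N+1) (A :: A :: (s ++ t)) C := h.perm (List.perm_middle.cons A)
  obtain ⟨e, h1, h2⟩ := h'
  have h3 : Pv (N+2) (A :: (s ++ t)) C := ⟨.cL _ _ _ e, h1, by simp only [EDeriv.size]; omega⟩
  exact h3.perm List.perm_middle.symm

theorem Pv.contrs {Γ' : List Fm} {C : Fm} : ∀ {N : ℕ} (Γ : List Fm), Γ ⊆ Γ' →
    Pv N (Γ ++ Γ') C → Pv (N + 3 * Γ.length) Γ' C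
  | N, [], _, h => by simpa using h
  | N, A :: Γ, hs, h => by
      have h1 : Pv (N+3) (Γ ++ Γ') C :=
        Pv.contr (List.mem_append_right _ (hs (List.mem_cons_self (a := A)))) (by simpa using h)
      exact (Pv.contrs Γ (fun x hx => hs (List.mem_cons_of_mem _ hx)) h1).mono
        (by simp only [List.length_cons]; omega)

theorem Pv.sub {N : ℕ} {Γ Γ' : List Fm} {C : Fm} (h : Pv N Γ C) (hs : Γ ⊆ Γ')
    (h1 : Γ.length ≤ 25) (h2 : Γ'.length ≤ 25) : Pv (N + 101) Γ' C :=
  (Pv.contrs Γ hs ((h.weak Γ').perm List.perm_append_comm)).mono (by omega)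

theorem Pv.ax {Γ : List Fm} {p : ℕ} {ts : Tms} (h : Fm.atom p ts ∈ Γ) (h2 : Γ.length ≤ 25) :
    Pv 102 Γ (.atom p ts) := by
  have h1 : Pv 1 [Fm.atom p ts] (.atom p ts) :=
    ⟨.ax p ts, by simp only [EDeriv.cutFms], by simp only [EDeriv.size]; omega⟩
  exact h1.sub (by simpa using h) (by simp) h2

theorem Pv.axT {Γ : List Fm} {a : Tm} (h : TT a ∈ Γ) (h2 : Γ.length ≤ 25) :
    Pv 102 Γ (TT a) := Pv.ax h h2

theorem Pv.axQ {Γ : List Fm} {a b : Tm} (h : QQ a b ∈ Γ) (h2 : Γ.length ≤ 25) :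
    Pv 102 Γ (QQ a b) := Pv.ax h h2

theorem Pv.impL {M N : ℕ} {Γ : List Fm} {A B C : Fm} (h : Pv M Γ A) (h' : Pv N (B :: Γ) C)
    (h2 : Γ.length ≤ 25) : Pv (M + N + 80) (.imp A B :: Γ) C := by
  obtain ⟨e, h3, h4⟩ := h
  obtain ⟨g, h5, h6⟩ := h'
  have h7 : Pv (M + N + 1) (.imp A B :: (Γ ++ Γ)) C :=
    ⟨.impL A B Γ [] Γ [C] e g, by simp [EDeriv.cutFms, h3, h5],
      by simp only [EDeriv.size]; omega⟩
  have h8 := h7.perm (Γ' := Γ ++ (.imp A B :: Γ)) List.perm_middle.symm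
  exact (h8.contrs Γ (List.subset_cons_self _ _)).mono (by omega)

theorem Pv.andR {M N : ℕ} {Γ : List Fm} {A B : Fm} (h : Pv M Γ A) (h' : Pv N Γ B)
    (h2 : Γ.length ≤ 25) : Pv (M + N + 80) Γ (.and A B) := by
  obtain ⟨e, h3, h4⟩ := h
  obtain ⟨g, h5, h6⟩ := h'
  have h7 : Pv (M + N + 1) (Γ ++ Γ) (.and A B) :=
    ⟨.andR A B Γ [] Γ [] e g, by simp [EDeriv.cutFms, h3, h5],
      by simp only [EDeriv.size]; omega⟩
  exact (h7.contrs Γ (fun _ h => h)).mono (by omega)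

theorem Pv.andL {N : ℕ} {Γ : List Fm} {A B C : Fm} (h : Pv N (A :: B :: Γ) C) :
    Pv (N+1) (.and A B :: Γ) C := by
  obtain ⟨e, h3, h4⟩ := h
  exact ⟨.andL _ _ _ _ e, h3, by simp only [EDeriv.size]; omega⟩

theorem Pv.impR {N : ℕ} {Γ : List Fm} {A B : Fm} (h : Pv N (A :: Γ) B) :
    Pv (N+1) Γ (.imp A B) := by
  obtain ⟨e, h3, h4⟩ := h
  exact ⟨.impR _ _ _ _ e, h3, by simp only [EDeriv.size]; omega⟩

theorem Pv.exR {N : ℕ} {Γ : List Fm} {A : Fm} (t : Tm) (h : Pv N Γ (inst0 A t)) :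
    Pv (N+1) Γ (inst0 A (.eps A)) := by
  obtain ⟨e, h3, h4⟩ := h
  exact ⟨.exR t _ _ _ e, h3, by simp only [EDeriv.size]; omega⟩

theorem Pv.allL {N : ℕ} {Γ : List Fm} {A C : Fm} (t : Tm) (h : Pv N (inst0 A t :: Γ) C) :
    Pv (N+1) (inst0 A (.eps (.not A)) :: Γ) C := by
  obtain ⟨e, h3, h4⟩ := h
  exact ⟨.allL t _ _ _ e, h3, by simp only [EDeriv.size]; omega⟩

theorem Pv.allE {N : ℕ} {Γ : List Fm} {A C : Fm} (t : Tm)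
    (h : Pv N (epsT (inst0 A t) :: Γ) C) : Pv (N+1) (epsT (.all A) :: Γ) C := by
  rw [epsT]
  refine Pv.allL t ?_
  rwa [inst0, epsT_subF] at h

/-- the epsilon translations of the axioms -/
def EAxs : List Fm := Axs.map epsT

theorem ls1 (u t : Tm) : subT 1 (liftT 0 u) (liftT 0 t) = liftT 0 (subT 0 u t) :=
  lift_subT 0 0 le_rfl u t
theorem ls2 (u t : Tm) : subT 2 (liftT 0 u) (liftT 0 t) = liftT 0 (subT 1 u t) :=
  lift_subT 0 1 (by omega) u t
theorem ls3 (u t : Tm) : subT 3 (liftT 0 u) (liftT 0 t) = liftT 0 (subT 2 u t) :=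
  lift_subT 0 2 (by omega) u t

theorem Pv.useX1 {N : ℕ} {Γ : List Fm} {C : Fm} (hE : EAxs ⊆ Γ) (y : Tm)
    (h : Pv N (TT (pT y zeroT (sT y)) :: Γ) C) : Pv (N + 4) Γ C := by
  refine Pv.contr (N := N+1) (A := epsT X1) (hE (by simp [EAxs, Axs])) ?_
  refine Pv.allE y ?_
  simpa [inst0, subF, subT, subTs, TT, pT, sT, zeroT, epsT] using h

theorem Pv.useX2 {N : ℕ} {Γ : List Fm} {C : Fm} (hE : EAxs ⊆ Γ) (hL : Γ.length ≤ 24)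
    {y x z w : Tm} (h1 : TT (pT y x z) ∈ Γ) (h2 : TT (pT z x w) ∈ Γ)
    (h : Pv N (TT (pT y (sT x) w) :: Γ) C) : Pv (N + 500) Γ C := by
  have h3 := Pv.impL (Pv.axT h1 (by omega)) (Pv.impL (Pv.axT h2 (by omega)) h (by omega))
    (by omega)
  refine (Pv.contr (N := N + 400+1+1+1+1) (A := epsT X2) (hE (by simp [EAxs, Axs])) ?_).mono ?_
  · refine Pv.allE y ?_
    simp only [inst0, subF]
    refine Pv.allE x ?_
    simp only [inst0, subF]
    refine Pv.allE z ?_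
    simp only [inst0, subF]
    refine Pv.allE w ?_
    simpa [inst0, subF, subT, subTs, TT, pT, sT, zeroT, epsT, sub_liftT, ls1, ls2, ls3] using h3.mono (by omega : _ ≤ N + 400)
  · omega

theorem Pv.useX3 {M N : ℕ} {Γ : List Fm} {C : Fm} (hE : EAxs ⊆ Γ) (hL : Γ.length ≤ 24)
    {a b c : Tm} (h1 : Pv M (TT a :: Γ) (.and (TT b) (TT c)))
    (h : Pv N (TT (fT a b c) :: Γ) C) : Pv (M + N + 500) Γ C := by
  have h3 := Pv.impL h1.impR h (by omega)
  refine (Pv.contr (N := M + N + 400+1+1+1) (A := epsT X3) (hE (by simp [EAxs, Axs])) ?_).mono ?_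
  · refine Pv.allE a ?_
    simp only [inst0, subF]
    refine Pv.allE b ?_
    simp only [inst0, subF]
    refine Pv.allE c ?_
    simpa [inst0, subF, subT, subTs, TT, fT, epsT, sub_liftT, ls1, ls2, ls3] using h3.mono (by omega : _ ≤ M + N + 400)
  · omega

theorem Pv.useX4 {N : ℕ} {Γ : List Fm} {C : Fm} (hE : EAxs ⊆ Γ) (hL : Γ.length ≤ 24)
    {a b c : Tm} (h1 : TT (fT a b c) ∈ Γ) (h2 : TT a ∈ Γ)
    (h : Pv N (TT b :: TT c :: Γ) C) : Pv (N + 500) Γ C := by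
  have h3 := Pv.impL (Pv.axT h1 (by omega)) (Pv.impL (Pv.axT h2 (by omega)) h.andL (by omega))
    (by omega)
  refine (Pv.contr (N := N + 400+1+1+1) (A := epsT X4) (hE (by simp [EAxs, Axs])) ?_).mono ?_
  · refine Pv.allE a ?_
    simp only [inst0, subF]
    refine Pv.allE b ?_
    simp only [inst0, subF]
    refine Pv.allE c ?_
    simpa [inst0, subF, subT, subTs, TT, fT, epsT, sub_liftT, ls1, ls2, ls3] using h3.mono (by omega : _ ≤ N + 400)
  · omega

theorem Pv.useX6 {N : ℕ} {Γ : List Fm} {C : Fm} (hE : EAxs ⊆ Γ) (hL : Γ.length ≤ 24)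
    {k x z : Tm} (h1 : QQ k x ∈ Γ) (h2 : TT (pT zeroT x z) ∈ Γ)
    (h : Pv N (QQ (sT k) z :: Γ) C) : Pv (N + 500) Γ C := by
  have h3 := Pv.impL (Pv.axQ h1 (by omega)) (Pv.impL (Pv.axT h2 (by omega)) h (by omega))
    (by omega)
  refine (Pv.contr (N := N + 400+1+1+1) (A := epsT X6) (hE (by simp [EAxs, Axs])) ?_).mono ?_
  · refine Pv.allE k ?_
    simp only [inst0, subF]
    refine Pv.allE x ?_
    simp only [inst0, subF]
    refine Pv.allE z ?_
    simpa [inst0, subF, subT, subTs, TT, QQ, pT, sT, zeroT, epsT, sub_liftT, ls1, ls2, ls3] using h3.mono (by omega : _ ≤ N + 400)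
  · omega

theorem X7_mem {Γ : List Fm} (hE : EAxs ⊆ Γ) : TT zeroT ∈ Γ :=
  hE (by simp [EAxs, Axs, X7, TT, epsT])
theorem X5_mem {Γ : List Fm} (hE : EAxs ⊆ Γ) : QQ zeroT zeroT ∈ Γ :=
  hE (by simp [EAxs, Axs, X5, QQ, epsT])

/-- matrix of the existential part, `bvar 0` being the existential variable -/
def zeF (a : Tm → Tm) (y x : Tm) : Fm :=
  .and (TT (a (.bvar 0))) (TT (pT (liftT 0 y) (liftT 0 x) (.bvar 0)))
def zeT (a : Tm → Tm) (y x : Tm) : Tm := .eps (zeF a y x)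
def bodyT (a : Tm → Tm) (y x : Tm) : Tm := fT (a y) (a (zeT a y x)) (pT y x (zeT a y x))
def etF (a : Tm → Tm) (x : Tm) : Fm := TT (bodyT a (.bvar 0) (liftT 0 x))
def etT (a : Tm → Tm) (x : Tm) : Tm := .eps (.not (etF a x))

/-- codes of Orevkov's formulas -/
def al : ℕ → Tm → Tm
  | 0, _ => zeroT
  | i+1, x => bodyT (al i) (etT (al i) x) x

theorem sub_pT (k : ℕ) (u a b c : Tm) :
    subT k u (pT a b c) = pT (subT k u a) (subT k u b) (subT k u c) := by
  simp [pT, subT, subTs]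
theorem sub_fT (k : ℕ) (u a b c : Tm) :
    subT k u (fT a b c) = fT (subT k u a) (subT k u b) (subT k u c) := by
  simp [fT, subT, subTs]
theorem sub_TT (k : ℕ) (u a : Tm) : subF k u (TT a) = TT (subT k u a) := by
  simp [TT, subF, subTs]

def Nat1 (a : Tm → Tm) : Prop := ∀ k u x, subT k u (a x) = a (subT k u x)

theorem sub_zeT {a : Tm → Tm} (ha : Nat1 a) (k : ℕ) (u y x : Tm) :
    subT k u (zeT a y x) = zeT a (subT k u y) (subT k u x) := by
  simp only [zeT, zeF, subT, subF, sub_TT, ha _ _ _, sub_pT, lift_subT 0 k (Nat.zero_le _)]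
  simp

theorem sub_bodyT {a : Tm → Tm} (ha : Nat1 a) (k : ℕ) (u y x : Tm) :
    subT k u (bodyT a y x) = bodyT a (subT k u y) (subT k u x) := by
  simp only [bodyT, sub_fT, sub_pT, sub_zeT ha, ha _ _ _]

theorem sub_etT {a : Tm → Tm} (ha : Nat1 a) (k : ℕ) (u x : Tm) :
    subT k u (etT a x) = etT a (subT k u x) := by
  simp only [etT, etF, subT, subF, sub_TT, sub_bodyT ha, lift_subT 0 k (Nat.zero_le _)]
  simp

theorem nat_al (i : ℕ) : Nat1 (al i) := by
  induction i with
  | zero => intro k u x; simp [al, zeroT, subT, subTs]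
  | succ i ih => intro k u x; simp only [al, sub_bodyT ih, sub_etT ih]

theorem inst_zeF {a : Tm → Tm} (ha : Nat1 a) (y x s : Tm) :
    inst0 (zeF a y x) s = .and (TT (a s)) (TT (pT y x s)) := by
  simp only [inst0, zeF, subF, sub_TT, ha _ _ _, sub_pT, sub_liftT]
  simp [subT]

theorem inst_etF {a : Tm → Tm} (ha : Nat1 a) (x s : Tm) :
    inst0 (etF a x) s = TT (bodyT a s x) := by
  simp only [inst0, etF, sub_TT, sub_bodyT ha, sub_liftT]
  simp [subT]

theorem Pv.useAl {N : ℕ} {Γ : List Fm} {C : Fm} (hE : EAxs ⊆ Γ) (hL : Γ.length ≤ 22)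
    (i : ℕ) {x t : Tm} (h1 : TT (al (i+1) x) ∈ Γ) (h2 : TT (al i t) ∈ Γ)
    (h : Pv N (TT (al i (zeT (al i) t x)) :: TT (pT t x (zeT (al i) t x)) :: Γ) C) : Pv (N + 1000) Γ C := by
  have h3 : Pv (N+101) (TT (al i (zeT (al i) t x)) :: TT (pT t x (zeT (al i) t x)) ::
      TT (bodyT (al i) t x) :: Γ) C :=
    h.sub (by intro A; simp; tauto) (by simp; omega) (by simp; omega)
  have h4 : Pv (N+601) (TT (bodyT (al i) t x) :: Γ) C :=
    Pv.useX4 (List.subset_cons_of_subset _ hE) (by simp; omega)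
      (a := al i t) (by simp [bodyT]) (by simp [h2]) h3
  have h5 : Pv (N+602) (TT (al (i+1) x) :: Γ) C := by
    have h6 := Pv.allL (A := etF (al i) x) (C := C) (Γ := Γ) (N := N+601) t
    simp only [inst_etF (nat_al i)] at h6
    exact h6 h4
  exact (Pv.contr h1 h5).mono (by omega)

theorem Pv.introAl {M N : ℕ} {Γ : List Fm} {C : Fm} (hE : EAxs ⊆ Γ) (hL : Γ.length ≤ 23)
    (i : ℕ) (x : Tm)
    (h1 : ∀ y, ∃ s, Pv M (TT (al i y) :: Γ) (TT (al i s)) ∧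
      Pv M (TT (al i y) :: Γ) (TT (pT y x s)))
    (h : Pv N (TT (al (i+1) x) :: Γ) C) : Pv (2 * M + N + 1000) Γ C := by
  obtain ⟨s, h2, h3⟩ := h1 (etT (al i) x)
  have h4 := Pv.andR h2 h3 (by simp; omega)
  rw [← inst_zeF (nat_al i)] at h4
  have h5 := Pv.exR s h4
  rw [inst_zeF (nat_al i)] at h5
  exact (Pv.useX3 hE (by omega) h5 h).mono (by omega)

theorem Pv.closeAl {N : ℕ} {Γ : List Fm} {C : Fm} (hE : EAxs ⊆ Γ) (hL : Γ.length ≤ 15)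
    (i : ℕ) (x : Tm) (h1 : TT (al i x) ∈ Γ)
    (h : Pv N (TT (al i (sT x)) :: Γ) C) : Pv (N + 10000) Γ C := by
  rcases i with _ | i
  · exact (Pv.contr (X7_mem hE) h).mono (by omega)
  · refine (Pv.introAl (M := 3000) hE (by omega) i (sT x) ?_ h).mono (by omega)
    intro y
    obtain ⟨z, hz⟩ : ∃ z, z = zeT (al i) y x := ⟨_, rfl⟩
    obtain ⟨w, hw⟩ : ∃ w, w = zeT (al i) z x := ⟨_, rfl⟩
    have key : ∀ C, Pv 1000 (TT (al i w) :: TT (pT z x w) ::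
        TT (al i z) :: TT (pT y x z) :: TT (al i y) :: Γ) C →
        Pv 3000 (TT (al i y) :: Γ) C := by
      intro C hC
      refine Pv.useAl (N := 2000) (List.subset_cons_of_subset _ hE) (by simp; omega) i
        (x := x) (t := y) (by simp [h1]) (by simp) ?_
      rw [← hz]
      refine Pv.useAl (N := 1000) (fun A hA => by simp [hE hA]) (by simp; omega) i
        (x := x) (t := z) (by simp [h1]) (by simp) ?_
      rwa [← hw]
    refine ⟨w, key _ ?_, key _ ?_⟩
    · exact (Pv.axT (by simp) (by simp; omega)).mono (by omega)
    · refine Pv.mono (N := 102 + 500) ?_ (by omega)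
      refine Pv.useX2 (z := z) (y := y) (x := x) (w := w) (fun A hA => by simp [hE hA])
        (by simp; omega) (by simp) (by simp) ?_
      exact Pv.axT (by simp) (by simp; omega)

theorem Pv.zeroAl {N : ℕ} {Γ : List Fm} {C : Fm} (hE : EAxs ⊆ Γ) (hL : Γ.length ≤ 14)
    (i : ℕ) (h : Pv N (TT (al i zeroT) :: Γ) C) : Pv (N + 40000) Γ C := by
  rcases i with _ | i
  · exact (Pv.contr (X7_mem hE) h).mono (by omega)
  · refine (Pv.introAl (M := 10500) hE (by omega) i zeroT ?_ h).mono (by omega)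
    intro y
    refine ⟨sT y, ?_, ?_⟩
    · refine Pv.mono (N := 102 + 10000) ?_ (by omega)
      refine Pv.closeAl (List.subset_cons_of_subset _ hE) (by simp; omega) i y (by simp) ?_
      exact Pv.axT (by simp) (by simp; omega)
    · refine Pv.mono (N := 102 + 4) ?_ (by omega)
      refine Pv.useX1 (List.subset_cons_of_subset _ hE) y ?_
      exact Pv.axT (by simp) (by simp; omega)

theorem sub_num (k : ℕ) (u : Tm) (n : ℕ) : subT k u (numT n) = numT n := by
  induction n with
  | zero => simp [numT, zeroT, subT, subTs]
  | succ n ih => simp [numT, sT, subT, subTs, ih]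

theorem len_EAxs : EAxs.length = 7 := by simp [EAxs, Axs]

theorem Pv.chain (n : ℕ) : ∀ (m k : ℕ) (x : Tm), k + m = n →
    Pv (50000 * (m + 1)) (QQ (numT k) x :: TT (al m x) :: EAxs) (epsT (Goal n)) := by
  intro m
  induction m with
  | zero =>
      intro k x hk
      have hk : k = n := by omega
      subst hk
      have h1 : Pv 102 (QQ (numT k) x :: TT (al 0 x) :: EAxs)
          (inst0 (QQ (numT k) (.bvar 0)) x) := by
        have : inst0 (QQ (numT k) (.bvar 0)) x = QQ (numT k) x := by
          simp [inst0, QQ, subF, subTs, sub_num, subT]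
        rw [this]
        exact Pv.axQ (by simp) (by simp [len_EAxs])
      exact (Pv.exR x h1).mono (by omega)
  | succ m ih =>
      intro k x hk
      have hl := len_EAxs
      refine Pv.mono (N := 50000 * (m + 1) + 101 + 500 + 1000 + 40000) ?_ (by omega)
      refine Pv.zeroAl (fun A hA => by simp [hA]) (by simp; omega) m ?_
      refine Pv.useAl (fun A hA => by simp [hA]) (by simp; omega) m (x := x) (t := zeroT)
        (by simp) (by simp) ?_
      refine Pv.useX6 (k := numT k) (x := x) (z := zeT (al m) zeroT x)
        (fun A hA => by simp [hA]) (by simp; omega) (by simp) (by simp) ?_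
      refine Pv.sub (ih (k+1) (zeT (al m) zeroT x) (by omega)) ?_ (by simp; omega) (by simp; omega)
      intro A hA
      simp only [numT, List.mem_cons] at hA ⊢
      tauto

theorem short_proof (n : ℕ) : Pv (50000 * (n + 1) + 40003) EAxs (epsT (Goal n)) := by
  have hl := len_EAxs
  refine Pv.mono (N := 50000 * (n + 1) + 3 + 40000) ?_ (by omega)
  refine Pv.zeroAl (fun A hA => hA) (by omega) n ?_
  refine Pv.contr (A := QQ zeroT zeroT) (X5_mem (fun A hA => by simp [hA])) ?_
  exact Pv.chain n n 0 zeroT (by omega)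

theorem sz_num (n : ℕ) : szT (numT n) = n + 1 := by
  induction n with
  | zero => simp [numT, zeroT, szT, szTs]
  | succ n ih => simp [numT, sT, szT, szTs, ih]; omega

theorem noEps_num (n : ℕ) : noEpsT (numT n) = true := by
  induction n with
  | zero => simp [numT, zeroT, noEpsT, noEpsTs]
  | succ n ih => simp [numT, sT, noEpsT, noEpsTs, ih]

theorem sz_goal (n : ℕ) : szF (epsT (Goal n)) = 2 * n + 6 := by
  simp [Goal, epsT, QQ, inst0, subF, subTs, sub_num, subT, szF, szT, szTs, sz_num]
  omega

theorem seqSize_snoc (Γ : List Fm) (B : Fm) : seqSize Γ [B] = seqSize Γ [] + szF B := by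
  simp only [seqSize, List.append_nil]
  induction Γ with
  | nil => simp
  | cons A Γ ih => simp only [List.cons_append, List.foldr_cons, ih]; omega

/-- There is a sequence of cut-free Lε-proofs of end-sequents
`S i` such that: (1) the size of `S i` is polynomial in `i`; (2) each `S i` is
the epsilon translation of a first-order sequent `S' i` with weak quantifiers
only; (3) the size of these cut-free Lε-proofs is polynomially bounded in `i`;
(4) no elementary function of `i` bounds the size of the smallest cut-free
LK-proofs of `S' i`.  Hence cut-free Lε-proofs give a non-elementary speed-up
over cut-free LK-proofs. -/
theorem leps_speedup_over_lk :
    ∃ S' : ℕ → List Fm × List Fm,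
      -- (2) S_i is the epsilon translation of the first-order sequent S'_i,
      -- which contains weak quantifiers only
      (∀ i, FOSeq (S' i).1 (S' i).2 ∧ WeakSeq (S' i).1 (S' i).2) ∧
      -- (1) the size of S_i = [S'_i]^ε is polynomial in i
      (∃ p : Polynomial ℕ,
        ∀ i, seqSize ((S' i).1.map epsT) ((S' i).2.map epsT) ≤ p.eval i) ∧
      -- (3) cut-free Lε-proofs of S_i of polynomial size
      (∃ q : Polynomial ℕ,
        ∀ i, ∃ e : EDeriv ((S' i).1.map epsT) ((S' i).2.map epsT),
          e.cutFms = [] ∧ e.size ≤ q.eval i) ∧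
      -- (4) no elementary bound on cut-free LK-proofs of S'_i
      (∀ f : ℕ → ℕ, IsElementary f →
        ¬ ∀ i, ∃ d : Deriv (S' i).1 (S' i).2,
            d.Std ∧ d.cutFms = [] ∧ d.size ≤ f i) := by
  refine ⟨fun i => (Axs, [Goal i]), ?_, ?_, ?_, ?_⟩
  · intro i
    refine ⟨?_, ?_⟩
    · simp [FOSeq, isFO, Axs, X1, X2, X3, X4, X5, X6, X7, Goal, TT, QQ, pT, sT, fT, zeroT, noEpsF,
        noEpsT, noEpsTs, noEps_num]
    · simp [WeakSeq, Axs, X1, X2, X3, X4, X5, X6, X7, Goal, TT, QQ, posW, negW]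
  · refine ⟨Polynomial.C 2 * Polynomial.X + Polynomial.C (seqSize (Axs.map epsT) [] + 6),
      fun i => ?_⟩
    simp only [List.map_cons, List.map_nil, seqSize_snoc, sz_goal, Polynomial.eval_add,
      Polynomial.eval_mul, Polynomial.eval_C, Polynomial.eval_X]
    omega
  · refine ⟨Polynomial.C 50000 * Polynomial.X + Polynomial.C 90003, fun i => ?_⟩
    obtain ⟨e, h1, h2⟩ := short_proof i
    refine ⟨e, h1, h2.trans ?_⟩
    simp only [Polynomial.eval_add, Polynomial.eval_mul, Polynomial.eval_C, Polynomial.eval_X]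
    omega
  · rintro f ⟨k, hk⟩ h
    refine not_elem k fun i => ?_
    obtain ⟨d, -, hc, hd⟩ := h i
    exact (lower d hc).trans (hd.trans (hk i))


end EpsCalc
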